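/- Let k > ℓ ≥ 1 be integers with k ≥ 3. For every ε > 0 there exists M > 0 such that for every integer m > M, the tensor product F_{m,ℓ}^{(k)} of all k-graphs on vertex set [m] with minimum ℓ-degree at least C(m−ℓ−1, k−ℓ−1) + 1 satisfies π_ℓ(F_{m,ℓ}^{(k)}) ≤ ε. -/

import Mathlib

/-!
Write `k = ℓ + r`, and count the edges through an `ℓ`-set by ordered `r`-tuples, so that degrees are
normalised by `n ^ r / r!`. The engine is that a random `m`-vertex induced subgraph inherits the
minimum `ℓ`-degree: for a uniform `m`-tuple `x` of host vertices and a fixed `ℓ`-set `S` of indices,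
condition on `x` restricted to `S`; the degree of `S` in the graph induced along `x` is then a
function of the remaining coordinates with small bounded differences and mean close to the degree
of the image of `S`. McDiarmid's inequality gives an exponentially small failure probability, and
a union bound over the `C(m, ℓ)` sets `S` shows that, for `m` large, at least half of all tuples are
injective and induce a graph of almost the same normalised minimum degree (`half_tuples_good`).

Two consequences prove the theorem.

* An induced subgraph of an `F`-free graph is `F`-free, so the normalised extremal degrees are
  almost decreasing (`exNorm_almost_decreasing`) and hence converge: the Turán density exists.
* The threshold `C(m-ℓ-1, r-1) + 1` has order `m ^ (r - 1)`, so for `m` large, in a host of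
  normalised degree above `ε`, half of all `m`-tuples induce a member of the family. The number `s`
  of members does not depend on the host, so some `Fam i` is induced by a positive proportion of
  all tuples. Jensen's inequality, one coordinate at a time, yields a blow-up of `Fam i` on distinct
  vertices (`blowup_count`, `exists_blowup`). Its parts are indexed by `Fin m` and can be given one
  vertex for each vertex of the tensor product, which then embeds by sending `v` to the copy
  labelled `v` in part `v i` (`containsCopy_tensorE`). Thus a tensor-product-free host has
  normalised degree at most `ε` once it is large (`eventually_exNorm_tensorE_le`).
-/

open Finset Filter

variable {α : Type*} {β : Type*}

/-- `(V, E)` is a `k`-uniform hypergraph: every edge is a `k`-element subset of `V`. -/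
def IsKGraph [DecidableEq α] (k : ℕ) (V : Finset α) (E : Finset (Finset α)) : Prop :=
  ∀ e ∈ E, e ⊆ V ∧ e.card = k

/-- The degree of a vertex set `S`: the number of edges containing `S`. -/
def degS [DecidableEq α] (E : Finset (Finset α)) (S : Finset α) : ℕ :=
  (E.filter fun e => S ⊆ e).card

/-- The minimum `ℓ`-degree of a hypergraph: the minimum of `degS` over `ℓ`-subsets of `V`. -/
noncomputable def minDeg [DecidableEq α] (ℓ : ℕ) (V : Finset α) (E : Finset (Finset α)) : ℕ :=
  sInf {d | ∃ S ⊆ V, S.card = ℓ ∧ d = degS E S}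

/-- The edge set of the link of `S`: `{e \ S : S ⊆ e ∈ E}`. -/
def linkE [DecidableEq α] (E : Finset (Finset α)) (S : Finset α) : Finset (Finset α) :=
  (E.filter fun e => S ⊆ e).image fun e => e \ S

/-- The rank (1-based position) of `x` within `T` with respect to `σ`. -/
def rankIn (T : Finset α) (σ : α → ℕ) (x : α) : ℕ :=
  (T.filter fun y => σ y ≤ σ x).card

/-- `σ` is an ordering of `V`, i.e. a bijection `V → {1, …, |V|}`. -/
def IsOrdering (V : Finset α) (σ : α → ℕ) : Prop :=
  Set.BijOn σ ↑V (Set.Icc 1 V.card)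

/-- `σ` is an `ℓ`-vanishing order of the `k`-graph `(V, E)`: it is an ordering of `V` and there
is a coloring `φ` of `ℓ`-sets of vertices such that for every edge `e` and every `ℓ`-subset `X`
of `e`, `φ X` equals the set of positions that `X` occupies inside `e` under `σ`. -/
def IsVanishingOrder [DecidableEq α] (ℓ : ℕ) (V : Finset α) (E : Finset (Finset α))
    (σ : α → ℕ) : Prop :=
  IsOrdering V σ ∧
    ∃ φ : Finset α → Finset ℕ,
      ∀ e ∈ E, ∀ X ⊆ e, X.card = ℓ → φ X = X.image (rankIn e σ)

/-- The hypergraph `(VH, EH)` contains a copy of `(VF, EF)`. -/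
def ContainsCopy [DecidableEq α] [DecidableEq β] (VF : Finset α) (EF : Finset (Finset α))
    (VH : Finset β) (EH : Finset (Finset β)) : Prop :=
  ∃ f : α → β, Set.InjOn f ↑VF ∧ (∀ v ∈ VF, f v ∈ VH) ∧ ∀ e ∈ EF, e.image f ∈ EH

/-- `ex_ℓ(n, F)`: the maximum of `δ_ℓ(H)` over all `F`-free `k`-graphs `H` on `n` vertices. -/
noncomputable def exDeg [DecidableEq α] (k ℓ n : ℕ) (VF : Finset α)
    (EF : Finset (Finset α)) : ℕ :=
  sSup {d | ∃ E : Finset (Finset (Fin n)), (∀ e ∈ E, e.card = k) ∧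
    ¬ ContainsCopy VF EF (Finset.univ : Finset (Fin n)) E ∧ d = minDeg ℓ Finset.univ E}

/-- The `ℓ`-degree Turán density of the `k`-graph `F = (VF, EF)` equals `x`, i.e.
`ex_ℓ(n, F) / C(n-ℓ, k-ℓ) → x` as `n → ∞` (this limit is known to exist). -/
def HasTuranDensity [DecidableEq α] (k ℓ : ℕ) (VF : Finset α) (EF : Finset (Finset α))
    (x : ℝ) : Prop :=
  Tendsto (fun n : ℕ => (exDeg k ℓ n VF EF : ℝ) / ((n - ℓ).choose (k - ℓ) : ℝ)) atTop (nhds x)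

/-- The `t`-uniform hypergraph `(V, E)` is `t`-partite: the vertices can be split into `t`
parts so that every edge contains exactly one vertex from each part. -/
def IsPartite (t : ℕ) (V : Finset α) (E : Finset (Finset α)) : Prop :=
  ∃ P : α → Fin t, ∀ e ∈ E, ∀ i : Fin t, (e.filter fun v => P v = i).card = 1

/-- The edge set of the tensor product `F_{m,ℓ}^{(k)}` of the family `Fam`: the vertices are
tuples in `Fin s → Fin m`, and `k` vertices form an edge iff for every index `i` their `i`-th
coordinates form an edge of `Fam i`. -/
def tensorE (k m s : ℕ) (Fam : Fin s → Finset (Finset (Fin m))) :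
    Finset (Finset (Fin s → Fin m)) :=
  ((Finset.univ : Finset (Fin s → Fin m)).powersetCard k).filter
    fun e => ∀ i, e.image (fun v => v i) ∈ Fam i

/-- `Fam` enumerates (without repetition) all `k`-graphs on the vertex set `Fin m` with minimum
`ℓ`-degree at least `C(m-ℓ-1, k-ℓ-1) + 1`. -/
def EnumeratesBig (k ℓ m s : ℕ) (Fam : Fin s → Finset (Finset (Fin m))) : Prop :=
  Function.Injective Fam ∧
    ∀ E : Finset (Finset (Fin m)),
      ((∀ e ∈ E, e.card = k) ∧
        (m - ℓ - 1).choose (k - ℓ - 1) + 1 ≤ minDeg ℓ (Finset.univ : Finset (Fin m)) E)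
      ↔ ∃ i, Fam i = E

/-! ### Bounded differences -/

/-- Moment generating function bound for a function of one uniform variable that
varies by at most `c ≤ 1`. -/
lemma sum_exp_le_one_var {V : Type*} [Fintype V] [Nonempty V] {c : ℝ} (hc : c ≤ 1)
    (g : V → ℝ) (hg : ∀ v w, |g v - g w| ≤ c) :
    ∑ v, Real.exp (g v) ≤
      Fintype.card V * Real.exp ((∑ v, g v) / Fintype.card V + c ^ 2) := by
  have hn : (0 : ℝ) < Fintype.card V := by exact_mod_cast Fintype.card_pos
  set μ : ℝ := (∑ v, g v) / Fintype.card V with hμ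
  have hsum : ∑ v, (g v - μ) = 0 := by
    rw [Finset.sum_sub_distrib, Finset.sum_const, Finset.card_univ, nsmul_eq_mul, hμ]
    field_simp
    ring
  have hdev : ∀ v, |g v - μ| ≤ c := by
    intro v
    have h1 : g v - μ = (∑ w, (g v - g w)) / Fintype.card V := by
      rw [Finset.sum_sub_distrib, Finset.sum_const, Finset.card_univ, nsmul_eq_mul, hμ]
      field_simp
    rw [h1, abs_div, abs_of_pos hn, div_le_iff₀ hn]
    calc |∑ w, (g v - g w)| ≤ ∑ w, |g v - g w| := Finset.abs_sum_le_sum_abs _ _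
      _ ≤ ∑ _w : V, c := Finset.sum_le_sum fun w _ => hg v w
      _ = c * Fintype.card V := by simp [mul_comm]
  have hexp : ∀ v, Real.exp (g v) ≤ Real.exp μ * (1 + (g v - μ) + c ^ 2) := by
    intro v
    have h1 := Real.abs_exp_sub_one_sub_id_le ((hdev v).trans hc)
    have h2 : (g v - μ) ^ 2 ≤ c ^ 2 := by
      rw [← sq_abs]
      exact pow_le_pow_left₀ (abs_nonneg _) (hdev v) 2
    have h3 : Real.exp (g v) = Real.exp μ * Real.exp (g v - μ) := by
      rw [← Real.exp_add]; congr 1; ring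
    rw [h3]
    have h4 := (abs_le.mp h1).2
    exact mul_le_mul_of_nonneg_left (by linarith) (Real.exp_pos _).le
  calc ∑ v, Real.exp (g v) ≤ ∑ v, Real.exp μ * (1 + (g v - μ) + c ^ 2) :=
        Finset.sum_le_sum fun v _ => hexp v
    _ = Fintype.card V * (Real.exp μ * (c ^ 2 + 1)) := by
        rw [← Finset.mul_sum, Finset.sum_add_distrib, Finset.sum_add_distrib, hsum]
        simp
        ring
    _ ≤ Fintype.card V * (Real.exp μ * Real.exp (c ^ 2)) := by
        gcongr
        exact Real.add_one_le_exp _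
    _ = _ := by rw [Real.exp_add]

/-- McDiarmid's bounded-difference inequality, in moment generating function form, for the uniform
measure on `Fin N → V`. -/
lemma sum_exp_le_of_bounded_diff {V : Type*} [Fintype V] [Nonempty V] {c : ℝ}
    (hc : c ≤ 1) : ∀ (N : ℕ) (f : (Fin N → V) → ℝ),
      (∀ x i v, |f (Function.update x i v) - f x| ≤ c) →
      ∑ x, Real.exp (f x) ≤ (Fintype.card V : ℝ) ^ N *
        Real.exp ((∑ x, f x) / (Fintype.card V : ℝ) ^ N + N * c ^ 2) := by
  have hn : (0 : ℝ) < Fintype.card V := by exact_mod_cast Fintype.card_pos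
  intro N
  induction N with
  | zero => intro f _; simp
  | succ N ih =>
    intro f hf
    set n : ℝ := (Fintype.card V : ℝ) with hnn
    have hsplit : ∀ h : (Fin (N + 1) → V) → ℝ,
        ∑ x, h x = ∑ v, ∑ y : Fin N → V, h (Fin.cons v y) := by
      intro h
      rw [← Fintype.sum_prod_type']
      exact (Fintype.sum_equiv (Fin.consEquiv fun _ => V) _ _ fun p => rfl).symm
    set g : V → ℝ := fun v => (∑ y : Fin N → V, f (Fin.cons v y)) / n ^ N with hgdef
    have hnN : 0 < n ^ N := pow_pos hn N
    have h1 : ∀ v, ∑ y : Fin N → V, Real.exp (f (Fin.cons v y)) ≤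
        n ^ N * Real.exp (g v + N * c ^ 2) := by
      intro v
      refine ih (fun y => f (Fin.cons v y)) fun y i w => ?_
      have := hf (Fin.cons v y) i.succ w
      rwa [← Fin.cons_update] at this
    have hg : ∀ v w, |g v - g w| ≤ c := by
      intro v w
      rw [hgdef]
      simp only
      rw [← sub_div, ← Finset.sum_sub_distrib, abs_div, abs_of_pos hnN, div_le_iff₀ hnN]
      calc |∑ y : Fin N → V, (f (Fin.cons v y) - f (Fin.cons w y))|
          ≤ ∑ y : Fin N → V, |f (Fin.cons v y) - f (Fin.cons w y)| :=
            Finset.abs_sum_le_sum_abs _ _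
        _ ≤ ∑ _y : Fin N → V, c := by
            refine Finset.sum_le_sum fun y _ => ?_
            have := hf (Fin.cons w y) 0 v
            rwa [Fin.update_cons_zero] at this
        _ = c * n ^ N := by simp [mul_comm, hnn]
    have h2 := sum_exp_le_one_var hc g hg
    have h3 : (∑ x, f x) / n ^ (N + 1) = (∑ v, g v) / n := by
      rw [hsplit, hgdef, ← Finset.sum_div, div_div, pow_succ]
    rw [hsplit, h3]
    calc ∑ v, ∑ y : Fin N → V, Real.exp (f (Fin.cons v y))
        ≤ ∑ v, n ^ N * Real.exp (g v + N * c ^ 2) := Finset.sum_le_sum fun v _ => h1 v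
      _ = n ^ N * Real.exp (N * c ^ 2) * ∑ v, Real.exp (g v) := by
          rw [Finset.mul_sum]
          refine Finset.sum_congr rfl fun v _ => ?_
          rw [Real.exp_add]; ring
      _ ≤ n ^ N * Real.exp (N * c ^ 2) * (n * Real.exp ((∑ v, g v) / n + c ^ 2)) := by
          gcongr
      _ = _ := by
          rw [pow_succ n]
          push_cast
          rw [show (∑ v, g v) / n + (N + 1 : ℝ) * c ^ 2
            = N * c ^ 2 + ((∑ v, g v) / n + c ^ 2) by ring, Real.exp_add (N * c ^ 2)]
          ring

/-- Markov's inequality applied to `exp f`: the fraction of tuples where `f` exceeds its mean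
by `a`. -/
lemma card_upper_tail_le {V : Type*} [Fintype V] [Nonempty V] {c : ℝ} (hc : c ≤ 1) (N : ℕ)
    (f : (Fin N → V) → ℝ) (hf : ∀ x i v, |f (Function.update x i v) - f x| ≤ c)
    (a : ℝ) (B : Finset (Fin N → V))
    (hB : ∀ x ∈ B, (∑ x, f x) / (Fintype.card V : ℝ) ^ N + a ≤ f x) :
    (B.card : ℝ) ≤ (Fintype.card V : ℝ) ^ N * Real.exp (N * c ^ 2 - a) := by
  have h := sum_exp_le_of_bounded_diff hc N f hf
  set μ := (∑ x, f x) / (Fintype.card V : ℝ) ^ N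
  have h1 : (B.card : ℝ) * Real.exp (μ + a) ≤ ∑ x, Real.exp (f x) := by
    calc (B.card : ℝ) * Real.exp (μ + a) = ∑ _x ∈ B, Real.exp (μ + a) := by simp
      _ ≤ ∑ x ∈ B, Real.exp (f x) :=
        Finset.sum_le_sum fun x hx => Real.exp_le_exp.mpr (hB x hx)
      _ ≤ _ := Finset.sum_le_sum_of_subset_of_nonneg (Finset.subset_univ _)
        fun x _ _ => (Real.exp_pos _).le
  have h2 := h1.trans h
  rw [← mul_le_mul_iff_left₀ (Real.exp_pos (μ + a))]
  refine h2.trans (le_of_eq ?_)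
  rw [mul_assoc, ← Real.exp_add]
  congr 2
  ring

/-! ### Elementary counting of tuples -/

lemma card_filter_eq_mul_le {ι V : Type*} [Fintype ι] [DecidableEq ι] [Fintype V] [DecidableEq V]
    (i j : ι) (hij : i ≠ j) :
    (univ.filter fun x : ι → V => x i = x j).card * Fintype.card V
      ≤ Fintype.card V ^ Fintype.card ι := by
  rw [← Fintype.card_fun, ← Finset.card_univ (α := V), ← Finset.card_product,
    ← Finset.card_univ (α := ι → V)]
  refine Finset.card_le_card_of_injOn (fun p => Function.update p.1 i p.2) (by simp) ?_
  rintro ⟨x, v⟩ hx ⟨y, w⟩ hy h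
  simp only [coe_product, coe_filter, mem_univ, true_and, coe_univ, Set.mem_prod,
    Set.mem_ofPred_eq, Set.mem_univ, and_true] at hx hy h
  have hpt : ∀ l, l ≠ i → x l = y l := fun l hl => by simpa [hl] using congrFun h l
  have hv : v = w := by simpa using congrFun h i
  have hxy : x = y := by
    funext l
    by_cases hl : l = i
    · rw [hl, hx, hy, hpt j hij.symm]
    · exact hpt l hl
  rw [hv, hxy]

lemma card_filter_apply_eq_mul_le {ι V : Type*} [Fintype ι] [DecidableEq ι] [Fintype V]
    [DecidableEq V] (i : ι) (a : V) :
    (univ.filter fun x : ι → V => x i = a).card * Fintype.card V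
      ≤ Fintype.card V ^ Fintype.card ι := by
  rw [← Fintype.card_fun, ← Finset.card_univ (α := V), ← Finset.card_product,
    ← Finset.card_univ (α := ι → V)]
  refine Finset.card_le_card_of_injOn (fun p => Function.update p.1 i p.2) (by simp) ?_
  rintro ⟨x, v⟩ hx ⟨y, w⟩ hy h
  simp only [coe_product, coe_filter, mem_univ, true_and, coe_univ, Set.mem_prod,
    Set.mem_ofPred_eq, Set.mem_univ, and_true] at hx hy h
  have hpt : ∀ l, l ≠ i → x l = y l := fun l hl => by simpa [hl] using congrFun h l
  have hv : v = w := by simpa using congrFun h i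
  have hxy : x = y := by
    funext l
    by_cases hl : l = i
    · rw [hl, hx, hy]
    · exact hpt l hl
  rw [hv, hxy]

/-- Union bound over the `|ι| ^ 2` possible collisions. -/
lemma card_not_injective_mul_le {ι V : Type*} [Fintype ι] [DecidableEq ι] [Fintype V]
    [DecidableEq V] :
    (univ.filter fun x : ι → V => ¬ Function.Injective x).card * Fintype.card V
      ≤ Fintype.card ι ^ 2 * Fintype.card V ^ Fintype.card ι := by
  have hsub : (univ.filter fun x : ι → V => ¬ Function.Injective x) ⊆
      ((univ : Finset (ι × ι)).filter fun p => p.1 ≠ p.2).biUnion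
        fun p => univ.filter fun x : ι → V => x p.1 = x p.2 := by
    intro x hx
    simp only [mem_filter, mem_univ, true_and, Function.Injective, not_forall] at hx
    obtain ⟨i, j, h, hij⟩ := hx
    simp only [mem_biUnion, mem_filter, mem_univ, true_and]
    exact ⟨(i, j), hij, h⟩
  calc _ ≤ (∑ p ∈ (univ : Finset (ι × ι)).filter fun p => p.1 ≠ p.2,
        (univ.filter fun x : ι → V => x p.1 = x p.2).card) * Fintype.card V :=
        Nat.mul_le_mul_right _ ((Finset.card_le_card hsub).trans Finset.card_biUnion_le)
    _ = ∑ p ∈ (univ : Finset (ι × ι)).filter fun p => p.1 ≠ p.2,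
        (univ.filter fun x : ι → V => x p.1 = x p.2).card * Fintype.card V := Finset.sum_mul _ _ _
    _ ≤ ∑ _p ∈ (univ : Finset (ι × ι)).filter fun p => p.1 ≠ p.2,
        Fintype.card V ^ Fintype.card ι :=
        Finset.sum_le_sum fun p hp => card_filter_eq_mul_le _ _ (Finset.mem_filter.mp hp).2
    _ ≤ ∑ _p : ι × ι, Fintype.card V ^ Fintype.card ι :=
        Finset.sum_le_sum_of_subset (Finset.filter_subset _ _)
    _ = _ := by simp [sq]

/-- Among all tuples `w : Fin r → U`, the ones meeting a fixed set `S` are few. -/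
lemma card_filter_hits_mul_le {U : Type*} [Fintype U] [DecidableEq U] (r : ℕ) (S : Finset U) :
    (univ.filter fun w : Fin r → U => ∃ j, w j ∈ S).card * Fintype.card U
      ≤ r * S.card * Fintype.card U ^ r := by
  have hsub : (univ.filter fun w : Fin r → U => ∃ j, w j ∈ S) ⊆
      ((univ : Finset (Fin r)) ×ˢ S).biUnion
        fun p => univ.filter fun w : Fin r → U => w p.1 = p.2 := by
    intro w hw
    simp only [mem_filter, mem_univ, true_and] at hw
    obtain ⟨j, hj⟩ := hw
    simp only [mem_biUnion, mem_filter, mem_univ, true_and, mem_product]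
    exact ⟨(j, w j), hj, rfl⟩
  calc _ ≤ (∑ p ∈ (univ : Finset (Fin r)) ×ˢ S,
        (univ.filter fun w : Fin r → U => w p.1 = p.2).card) * Fintype.card U :=
        Nat.mul_le_mul_right _ ((Finset.card_le_card hsub).trans Finset.card_biUnion_le)
    _ = ∑ p ∈ (univ : Finset (Fin r)) ×ˢ S,
        (univ.filter fun w : Fin r → U => w p.1 = p.2).card * Fintype.card U :=
        Finset.sum_mul _ _ _
    _ ≤ ∑ _p ∈ (univ : Finset (Fin r)) ×ˢ S, Fintype.card U ^ r :=
        Finset.sum_le_sum fun p _ => by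
          simpa using card_filter_apply_eq_mul_le (ι := Fin r) p.1 p.2
    _ = _ := by simp

/-- Restricting a uniform `x : ι → V` along an injection `w : κ → ι` gives a uniform `κ → V`. -/
lemma sum_comp_injective {ι κ V : Type*} [Fintype ι] [Fintype κ] [Fintype V] [DecidableEq ι]
    [DecidableEq κ] (w : κ → ι) (hw : Function.Injective w) (g : (κ → V) → ℝ) :
    (∑ x : ι → V, g (x ∘ w)) * (Fintype.card V : ℝ) ^ Fintype.card κ =
      (∑ u, g u) * (Fintype.card V : ℝ) ^ Fintype.card ι := by
  classical
  -- the pair `(x, u)` is sent to `(x ∘ w, x overwritten by u along w)`, which is reversible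
  let e : (ι → V) × (κ → V) ≃ (κ → V) × (ι → V) :=
    { toFun := fun p => (p.1 ∘ w, Function.extend w p.2 p.1)
      invFun := fun p => (Function.extend w p.1 p.2, p.2 ∘ w)
      left_inv := by
        rintro ⟨x, u⟩
        refine Prod.ext (funext fun i => ?_) (funext fun j => ?_)
        · by_cases h : ∃ j, w j = i
          · obtain ⟨j, rfl⟩ := h
            simp [hw.extend_apply]
          · simp [Function.extend_apply' _ _ _ h]
        · simp [hw.extend_apply]
      right_inv := by
        rintro ⟨u, x⟩
        refine Prod.ext (funext fun j => ?_) (funext fun i => ?_)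
        · simp [hw.extend_apply]
        · by_cases h : ∃ j, w j = i
          · obtain ⟨j, rfl⟩ := h
            simp [hw.extend_apply]
          · simp [Function.extend_apply' _ _ _ h] }
  have h1 : ∑ p : (ι → V) × (κ → V), g (p.1 ∘ w) = ∑ p : (κ → V) × (ι → V), g p.1 :=
    Fintype.sum_equiv e _ _ fun p => rfl
  rw [Fintype.sum_prod_type, Fintype.sum_prod_type] at h1
  simpa [Finset.mul_sum, mul_comm] using h1

/-- Resampling the coordinates outside `S`: counting `x` with a property is the same as
counting pairs `(z, x)` such that the tuple equal to `z` on `S` and to `x` off `S` has it. -/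
lemma card_mul_eq_sum_piecewise {ι V : Type*} [Fintype ι] [Fintype V] [DecidableEq ι]
    (S : Finset ι) (P : (ι → V) → Prop) [DecidablePred P] :
    (univ.filter P).card * Fintype.card (ι → V) =
      ∑ z : ι → V, (univ.filter fun x : ι → V => P (S.piecewise z x)).card := by
  let e : (ι → V) × (ι → V) ≃ (ι → V) × (ι → V) :=
    { toFun := fun p => (S.piecewise p.1 p.2, S.piecewise p.2 p.1)
      invFun := fun p => (S.piecewise p.1 p.2, S.piecewise p.2 p.1)
      left_inv := by
        rintro ⟨x, u⟩
        refine Prod.ext (funext fun i => ?_) (funext fun i => ?_) <;>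
          by_cases h : i ∈ S <;> simp [h]
      right_inv := by
        rintro ⟨x, u⟩
        refine Prod.ext (funext fun i => ?_) (funext fun i => ?_) <;>
          by_cases h : i ∈ S <;> simp [h] }
  have h1 : ∑ p : (ι → V) × (ι → V), (if P (S.piecewise p.1 p.2) then 1 else 0) =
      ∑ p : (ι → V) × (ι → V), if P p.1 then 1 else 0 :=
    Fintype.sum_equiv e _ _ fun p => rfl
  rw [Fintype.sum_prod_type, Fintype.sum_prod_type] at h1
  simp only [Finset.card_filter]
  rw [h1, Finset.sum_mul]
  refine Finset.sum_congr rfl fun x _ => ?_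
  split_ifs <;> simp

/-! ### Degrees counted by ordered tuples -/

lemma card_tuples_image_eq {V : Type*} [Fintype V] [DecidableEq V] {r : ℕ} (T : Finset V)
    (hT : T.card = r) :
    (univ.filter fun u : Fin r → V => univ.image u = T).card = r.factorial := by
  have h : (univ : Finset (Fin r ↪ T)).card = r.factorial := by
    rw [Finset.card_univ, Fintype.card_embedding_eq]
    simp [hT, Nat.descFactorial_self]
  rw [← h]
  symm
  refine Finset.card_bij (fun f _ => fun i => (f i : V)) ?_ ?_ ?_
  · intro f _
    simp only [mem_filter, mem_univ, true_and]
    refine Finset.eq_of_subset_of_card_le ?_ ?_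
    · intro v hv
      obtain ⟨i, _, rfl⟩ := Finset.mem_image.mp hv
      exact (f i).2
    · have := Finset.card_image_of_injective (univ : Finset (Fin r))
        (Subtype.val_injective.comp f.injective)
      simp only [card_univ, Fintype.card_fin] at this
      exact hT.le.trans this.ge
  · intro f _ g _ hfg
    ext i
    exact congrFun hfg i
  · intro u hu
    simp only [mem_filter, mem_univ, true_and] at hu
    have hinj : Function.Injective u := by
      rw [← Set.injOn_univ, ← Finset.coe_univ, ← Finset.card_image_iff]
      simp [hu, hT]
    have hmem : ∀ i, u i ∈ T := fun i => hu ▸ Finset.mem_image_of_mem _ (Finset.mem_univ i)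
    exact ⟨⟨fun i => ⟨u i, hmem i⟩, fun i j hij => hinj (by simpa using hij)⟩,
      Finset.mem_univ _, rfl⟩

/-- Each edge through `Z` is counted by the `r!` orderings of its vertices outside `Z`; replacing
sets by ordered tuples makes the degree a count over a product space. -/
lemma card_tuples_link {V : Type*} [Fintype V] [DecidableEq V] {ℓ r : ℕ}
    (E : Finset (Finset V)) (hE : ∀ e ∈ E, e.card = ℓ + r) (Z : Finset V) (hZ : Z.card = ℓ) :
    (univ.filter fun u : Fin r → V => Z ∪ univ.image u ∈ E).card = r.factorial * degS E Z := by
  have hmaps : ∀ u ∈ (univ.filter fun u : Fin r → V => Z ∪ univ.image u ∈ E),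
      Z ∪ univ.image u ∈ E.filter fun e => Z ⊆ e := by
    intro u hu
    simp only [mem_filter, mem_univ, true_and] at hu ⊢
    exact ⟨hu, Finset.subset_union_left⟩
  rw [Finset.card_eq_sum_card_fiberwise hmaps, degS, mul_comm, ← smul_eq_mul, ← Finset.sum_const]
  refine Finset.sum_congr rfl fun e he => ?_
  obtain ⟨heE, hZe⟩ := Finset.mem_filter.mp he
  have hcard : (e \ Z).card = r := by
    rw [Finset.card_sdiff_of_subset hZe, hE e heE, hZ]; omega
  rw [← card_tuples_image_eq (e \ Z) hcard, Finset.filter_filter]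
  congr 1
  refine Finset.filter_congr fun u _ => ?_
  constructor
  · rintro ⟨_, hu⟩
    symm
    refine Finset.eq_of_subset_of_card_le ?_ ?_
    · rw [← hu]
      intro v hv
      obtain ⟨h1, h2⟩ := Finset.mem_sdiff.mp hv
      exact (Finset.mem_union.mp h1).resolve_left h2
    · rw [hcard]
      exact Finset.card_image_le.trans (by simp)
  · intro hu
    have : Z ∪ univ.image u = e := by rw [hu, Finset.union_sdiff_of_subset hZe]
    exact ⟨this ▸ heE, this⟩

/-- The `k`-graph induced by `E` along a tuple `x`: a `k`-set of indices is an edge when `x` maps it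
onto an edge of `E`. If `x` is injective this is a copy of the induced subgraph on its range. -/
def pullE {U V : Type*} [Fintype U] [DecidableEq U] [DecidableEq V] (k : ℕ)
    (E : Finset (Finset V)) (x : U → V) : Finset (Finset U) :=
  (univ.powersetCard k).filter fun e => e.image x ∈ E

/-- For `S` fixed, the degree in the pulled-back graph depends on `x` only through which of the
tuples `x ∘ w` lie in the link of `S.image x`. -/
lemma factorial_mul_degS_pullE {U V : Type*} [Fintype U] [DecidableEq U] [DecidableEq V] {ℓ r : ℕ}
    (E : Finset (Finset V)) (hE : ∀ e ∈ E, e.card = ℓ + r) (x : U → V) (S : Finset U)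
    (hS : S.card = ℓ) :
    r.factorial * degS (pullE (ℓ + r) E x) S =
      (univ.filter fun w : Fin r → U => S.image x ∪ univ.image (x ∘ w) ∈ E).card := by
  rw [← card_tuples_link (pullE (ℓ + r) E x)
    (fun e he => (Finset.mem_powersetCard.mp (Finset.mem_filter.mp he).1).2) S hS]
  congr 1
  refine Finset.filter_congr fun w _ => ?_
  have himg : (S ∪ univ.image w).image x = S.image x ∪ univ.image (x ∘ w) := by
    rw [Finset.image_union, Finset.image_image]
  rw [pullE, Finset.mem_filter, himg, Finset.mem_powersetCard]
  refine ⟨fun h => h.2, fun h => ⟨⟨Finset.subset_univ _, le_antisymm ?_ ?_⟩, h⟩⟩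
  · refine (Finset.card_union_le _ _).trans ?_
    rw [hS]
    exact Nat.add_le_add_left (Finset.card_image_le.trans (by simp)) _
  · rw [← hE _ h, ← himg]
    exact Finset.card_image_le

/-! ### Minimum degree of a random induced subgraph -/

/-- Changing one value of `x` affects few of the tuples `x ∘ w`. -/
lemma abs_card_update_sub_mul_le {V : Type*} {m r : ℕ}
    (P : (Fin r → V) → Prop) [DecidablePred P] (x y : Fin m → V) (i : Fin m)
    (hxy : ∀ j, j ≠ i → x j = y j) :
    |((univ.filter fun w : Fin r → Fin m => P (x ∘ w)).card : ℝ) -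
      (univ.filter fun w : Fin r → Fin m => P (y ∘ w)).card| * m ≤ r * (m : ℝ) ^ r := by
  have key : ∀ x y : Fin m → V, (∀ j, j ≠ i → x j = y j) →
      (univ.filter fun w : Fin r → Fin m => P (x ∘ w)).card ≤
      (univ.filter fun w : Fin r → Fin m => P (y ∘ w)).card +
      (univ.filter fun w : Fin r → Fin m => ∃ j, w j ∈ ({i} : Finset (Fin m))).card := by
    intro x y hxy
    refine (Finset.card_le_card ?_).trans (Finset.card_union_le _ _)
    intro w hw
    simp only [mem_filter, mem_univ, true_and, mem_union, mem_singleton] at hw ⊢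
    by_cases h : ∃ j, w j = i
    · exact Or.inr h
    · left
      have : y ∘ w = x ∘ w := funext fun j => (hxy _ fun hj => h ⟨j, hj⟩).symm
      rwa [this]
  have h1 := key x y hxy
  have h2 := key y x fun j hj => (hxy j hj).symm
  have h3 := card_filter_hits_mul_le r ({i} : Finset (Fin m))
  simp only [card_singleton, mul_one, Fintype.card_fin] at h3
  have h3' : ((univ.filter fun w : Fin r → Fin m => ∃ j, w j ∈ ({i} : Finset (Fin m))).card : ℝ) * m
      ≤ r * (m : ℝ) ^ r := by exact_mod_cast h3
  refine le_trans (mul_le_mul_of_nonneg_right ?_ (Nat.cast_nonneg m)) h3'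
  rw [abs_le]
  constructor
  · have : ((univ.filter fun w : Fin r → Fin m => P (y ∘ w)).card : ℝ) ≤ _ := Nat.cast_le.mpr h2
    push_cast at this
    linarith
  · have : ((univ.filter fun w : Fin r → Fin m => P (x ∘ w)).card : ℝ) ≤ _ := Nat.cast_le.mpr h1
    push_cast at this
    linarith

/-- Lower bound for the mean: most tuples `w` are injective and avoid `S`, and for each of those
`x ∘ w` is uniformly distributed when `x` is. -/
lemma sum_card_piecewise_ge {V : Type*} [Fintype V] [Nonempty V] {m r : ℕ} (hm : 0 < m)
    (S : Finset (Fin m)) (z : Fin m → V) (P : (Fin r → V) → Prop) [DecidablePred P] {d t : ℝ}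
    (hd0 : 0 ≤ d) (ht : 0 ≤ t)
    (hP : d * (Fintype.card V : ℝ) ^ r ≤ (univ.filter P).card)
    (hmt : (r ^ 2 + r * S.card : ℝ) ≤ t * m) :
    (d - t) * (m : ℝ) ^ r * (Fintype.card V : ℝ) ^ m ≤
      ∑ x : Fin m → V,
        ((univ.filter fun w : Fin r → Fin m => P (S.piecewise z x ∘ w)).card : ℝ) := by
  classical
  have hn : (0 : ℝ) < Fintype.card V := by exact_mod_cast Fintype.card_pos
  have hm' : (0 : ℝ) < m := by exact_mod_cast hm
  set n : ℝ := (Fintype.card V : ℝ) with hnn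
  set W := univ.filter fun w : Fin r → Fin m => Function.Injective w ∧ ∀ j, w j ∉ S with hW
  have hd1 : d ≤ 1 := by
    have h1 : ((univ.filter P).card : ℝ) ≤ n ^ r := by
      have : (univ.filter P).card ≤ Fintype.card V ^ r := by
        simpa using Finset.card_le_univ (univ.filter P)
      rw [hnn]; exact_mod_cast this
    have h2 := hP.trans h1
    have h3 : 0 < n ^ r := pow_pos hn r
    by_contra h
    push Not at h
    nlinarith
  have hWcard : (1 - t) * (m : ℝ) ^ r ≤ W.card := by
    have h1 : m ^ r ≤ W.card +
        ((univ.filter fun w : Fin r → Fin m => ¬ Function.Injective w).card +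
        (univ.filter fun w : Fin r → Fin m => ∃ j, w j ∈ S).card) := by
      have h2 : (univ : Finset (Fin r → Fin m)) ⊆ W ∪
        ((univ.filter fun w : Fin r → Fin m => ¬ Function.Injective w) ∪
        (univ.filter fun w : Fin r → Fin m => ∃ j, w j ∈ S)) := by
        intro w _
        simp only [hW, mem_union, mem_filter, mem_univ, true_and]
        by_cases h : Function.Injective w
        · by_cases h' : ∃ j, w j ∈ S
          · exact Or.inr (Or.inr h')
          · exact Or.inl ⟨h, not_exists.mp h'⟩
        · exact Or.inr (Or.inl h)
      have h3 := Finset.card_le_card h2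
      rw [Finset.card_univ] at h3
      simp only [Fintype.card_fun, Fintype.card_fin] at h3
      exact h3.trans ((Finset.card_union_le _ _).trans
        (Nat.add_le_add_left (Finset.card_union_le _ _) _))
    have h2 := card_not_injective_mul_le (ι := Fin r) (V := Fin m)
    have h3 := card_filter_hits_mul_le r S
    simp only [Fintype.card_fin] at h2 h3
    have h1' : (m : ℝ) ^ r ≤ W.card +
        ((univ.filter fun w : Fin r → Fin m => ¬ Function.Injective w).card +
        (univ.filter fun w : Fin r → Fin m => ∃ j, w j ∈ S).card) := by exact_mod_cast h1
    have h2' : ((univ.filter fun w : Fin r → Fin m => ¬ Function.Injective w).card : ℝ) * m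
        ≤ r ^ 2 * (m : ℝ) ^ r := by exact_mod_cast h2
    have h3' : ((univ.filter fun w : Fin r → Fin m => ∃ j, w j ∈ S).card : ℝ) * m
        ≤ r * S.card * (m : ℝ) ^ r := by exact_mod_cast h3
    have h4 : (r ^ 2 + r * S.card : ℝ) * (m : ℝ) ^ r ≤ t * m * (m : ℝ) ^ r :=
      mul_le_mul_of_nonneg_right hmt (by positivity)
    rw [← mul_le_mul_iff_left₀ hm']
    nlinarith
  have hmean : ∀ w ∈ W, d * n ^ m ≤
      ∑ x : Fin m → V, if P (S.piecewise z x ∘ w) then (1 : ℝ) else 0 := by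
    intro w hw
    obtain ⟨hwi, hwS⟩ := (Finset.mem_filter.mp hw).2
    have h1 : ∀ x : Fin m → V, S.piecewise z x ∘ w = x ∘ w := fun x =>
      funext fun j => by simp [hwS j]
    simp only [h1]
    have h2 := sum_comp_injective (V := V) w hwi fun u => if P u then (1 : ℝ) else 0
    simp only [Fintype.card_fin, Finset.sum_boole] at h2 ⊢
    have h3 : 0 < n ^ r := pow_pos hn r
    have h4 : 0 < n ^ m := pow_pos hn m
    rw [← mul_le_mul_iff_left₀ h3, h2]
    calc d * n ^ m * n ^ r = d * n ^ r * n ^ m := by ring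
      _ ≤ _ := mul_le_mul_of_nonneg_right hP h4.le
  have hcast : ∀ x : Fin m → V,
      ((univ.filter fun w : Fin r → Fin m => P (S.piecewise z x ∘ w)).card : ℝ) =
        ∑ w : Fin r → Fin m, if P (S.piecewise z x ∘ w) then (1 : ℝ) else 0 := fun x => by
    rw [Finset.sum_boole]
  simp only [hcast]
  rw [Finset.sum_comm]
  have hmr : 0 < (m : ℝ) ^ r := by positivity
  have hnm : 0 < n ^ m := by positivity
  calc (d - t) * (m : ℝ) ^ r * n ^ m ≤ ((1 - t) * (m : ℝ) ^ r) * (d * n ^ m) := by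
        have : d - t ≤ (1 - t) * d := by nlinarith
        calc (d - t) * (m : ℝ) ^ r * n ^ m = (d - t) * ((m : ℝ) ^ r * n ^ m) := by ring
          _ ≤ (1 - t) * d * ((m : ℝ) ^ r * n ^ m) :=
            mul_le_mul_of_nonneg_right this (by positivity)
          _ = _ := by ring
    _ ≤ W.card * (d * n ^ m) := mul_le_mul_of_nonneg_right hWcard (by positivity)
    _ = ∑ _w ∈ W, d * n ^ m := by simp
    _ ≤ ∑ w ∈ W, ∑ x : Fin m → V, if P (S.piecewise z x ∘ w) then (1 : ℝ) else 0 :=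
        Finset.sum_le_sum hmean
    _ ≤ _ := Finset.sum_le_sum_of_subset_of_nonneg (Finset.subset_univ _) fun w _ _ =>
        Finset.sum_nonneg fun x _ => by split_ifs <;> norm_num

/-- Exponential tail bound for the degree of one fixed `S` whose image is prescribed by `z`. -/
lemma card_low_link_le {V : Type*} [Fintype V] [Nonempty V] {m r : ℕ} (hm : 0 < m) (hr : 0 < r)
    (S : Finset (Fin m)) (z : Fin m → V) (P : (Fin r → V) → Prop) [DecidablePred P] {d t : ℝ}
    (hd0 : 0 ≤ d) (ht : 0 < t) (ht1 : t ≤ 1)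
    (hP : d * (Fintype.card V : ℝ) ^ r ≤ (univ.filter P).card)
    (hmt : (r ^ 2 + r * S.card : ℝ) ≤ t / 2 * m) :
    ((univ.filter fun x : Fin m → V =>
      ((univ.filter fun w : Fin r → Fin m => P (S.piecewise z x ∘ w)).card : ℝ) <
        (d - t) * (m : ℝ) ^ r).card : ℝ) ≤
      (Fintype.card V : ℝ) ^ m * Real.exp (-(t ^ 2 / (16 * r ^ 2)) * m) := by
  have hn : (0 : ℝ) < Fintype.card V := by exact_mod_cast Fintype.card_pos
  have hm' : (0 : ℝ) < m := by exact_mod_cast hm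
  have hr' : (1 : ℝ) ≤ r := by exact_mod_cast hr
  have hr0 : (0 : ℝ) < r := by exact_mod_cast hr
  set G : (Fin m → V) → ℝ := fun x =>
    ((univ.filter fun w : Fin r → Fin m => P (S.piecewise z x ∘ w)).card : ℝ) with hG
  -- `δ` minimises the exponent `m (δ r)² - δ m t / 2` of the tail bound
  set δ : ℝ := t / (4 * r ^ 2) with hδ
  have hδ0 : 0 < δ := by positivity
  have hmr : 0 < (m : ℝ) ^ r := by positivity
  have hnm : 0 < (Fintype.card V : ℝ) ^ m := by positivity
  set lam : ℝ := δ * m / (m : ℝ) ^ r with hlam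
  have hlam0 : 0 < lam := by positivity
  have hc : δ * r ≤ 1 := by
    rw [hδ, div_mul_eq_mul_div, div_le_one (by positivity)]
    nlinarith
  have hdiff : ∀ x i v, |(-lam * G (Function.update x i v)) - (-lam * G x)| ≤ δ * r := by
    intro x i v
    have h1 := abs_card_update_sub_mul_le P (S.piecewise z (Function.update x i v))
      (S.piecewise z x) i (fun j hj => by by_cases hjS : j ∈ S <;> simp [hjS, hj])
    rw [← mul_sub, abs_mul, abs_neg, abs_of_pos hlam0, hlam]
    rw [div_mul_eq_mul_div, div_le_iff₀ hmr]
    calc δ * m * |G (Function.update x i v) - G x|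
        = δ * (|G (Function.update x i v) - G x| * m) := by ring
      _ ≤ δ * (r * (m : ℝ) ^ r) := mul_le_mul_of_nonneg_left h1 hδ0.le
      _ = _ := by ring
  have hmean := sum_card_piecewise_ge hm S z P hd0 (by positivity : (0 : ℝ) ≤ t / 2) hP hmt
  have htail := card_upper_tail_le hc m (fun x => -lam * G x) hdiff (δ * m * (t / 2))
    (univ.filter fun x : Fin m → V => G x < (d - t) * (m : ℝ) ^ r) (by
      intro x hx
      have hx' : G x < (d - t) * (m : ℝ) ^ r := (Finset.mem_filter.mp hx).2
      have h1 : (d - t / 2) * (m : ℝ) ^ r ≤ (∑ x, G x) / (Fintype.card V : ℝ) ^ m := by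
        rw [le_div_iff₀ hnm]; exact hmean
      rw [← Finset.mul_sum, mul_div_assoc]
      have h2 : lam * (t / 2 * (m : ℝ) ^ r) = δ * m * (t / 2) := by
        rw [hlam]; field_simp
      rw [← h2]
      nlinarith)
  refine htail.trans (le_of_eq ?_)
  congr 2
  rw [hδ]
  field_simp
  ring

open Classical in
/-- If every `ℓ`-set of `E` has normalised degree at least `d`, at least half of all `m`-tuples are
injective and induce a `k`-graph all of whose `ℓ`-sets have normalised degree at least `d - t`. -/
lemma half_tuples_good {V : Type*} [Fintype V] [DecidableEq V] [Nonempty V] {m ℓ r : ℕ}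
    (hm : 0 < m) (hr : 0 < r) {d t : ℝ} (hd0 : 0 ≤ d) (ht : 0 < t) (ht1 : t ≤ 1)
    (hmt : (r ^ 2 + r * ℓ : ℝ) ≤ t / 2 * m)
    (hexp : (m : ℝ) ^ ℓ * Real.exp (-(t ^ 2 / (16 * r ^ 2)) * m) ≤ 1 / 4)
    (hn : 4 * m ^ 2 ≤ Fintype.card V)
    (E : Finset (Finset V)) (hE : ∀ e ∈ E, e.card = ℓ + r)
    (hdeg : ∀ Z : Finset V, Z.card = ℓ →
      d * (Fintype.card V : ℝ) ^ r ≤ r.factorial * degS E Z) :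
    (Fintype.card V : ℝ) ^ m / 2 ≤ (univ.filter fun x : Fin m → V => Function.Injective x ∧
      ∀ S : Finset (Fin m), S.card = ℓ →
        (d - t) * (m : ℝ) ^ r ≤ r.factorial * degS (pullE (ℓ + r) E x) S).card := by
  have hn0 : (0 : ℝ) < Fintype.card V := by exact_mod_cast Fintype.card_pos
  set n : ℝ := (Fintype.card V : ℝ) with hnn
  have hnm : 0 < n ^ m := by positivity
  set bad : Finset (Fin m) → (Fin m → V) → Prop := fun S x => (S.image x).card = ℓ ∧
    (r.factorial * degS (pullE (ℓ + r) E x) S : ℝ) < (d - t) * (m : ℝ) ^ r with hbad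
  set η := Real.exp (-(t ^ 2 / (16 * r ^ 2)) * m) with hη
  have hbadS : ∀ S : Finset (Fin m), S.card = ℓ →
      ((univ.filter (bad S)).card : ℝ) ≤ n ^ m * η := by
    intro S hS
    have h1 := card_mul_eq_sum_piecewise S (bad S)
    have h2 : ∀ z : Fin m → V,
        ((univ.filter fun x : Fin m → V => bad S (S.piecewise z x)).card : ℝ) ≤ n ^ m * η := by
      intro z
      have himg : ∀ x : Fin m → V, S.image (S.piecewise z x) = S.image z := fun x =>
        Finset.image_congr fun i hi => by simp [Finset.mem_coe.mp hi]
      by_cases hz : (S.image z).card = ℓ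
      · refine le_trans ?_ (card_low_link_le hm hr S z
          (fun u : Fin r → V => S.image z ∪ univ.image u ∈ E) hd0 ht ht1 ?_ (by rwa [hS]))
        · refine Nat.cast_le.mpr (Finset.card_le_card ?_)
          intro x hx
          simp only [mem_filter, mem_univ, true_and] at hx ⊢
          have h3 := hx.2
          rw [← Nat.cast_mul, factorial_mul_degS_pullE E hE _ S hS, himg] at h3
          convert h3
        · have h3 := hdeg _ hz
          rw [← Nat.cast_mul, ← card_tuples_link E hE _ hz] at h3
          convert h3
      · have : (univ.filter fun x : Fin m → V => bad S (S.piecewise z x)) = ∅ := by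
          refine Finset.filter_eq_empty_iff.mpr fun x _ hx => hz ?_
          have := hx.1
          rwa [himg] at this
        rw [this]
        simp only [card_empty, Nat.cast_zero]
        positivity
    have h3 : ((univ.filter (bad S)).card : ℝ) * n ^ m ≤ (n ^ m * η) * n ^ m := by
      have h4 : ((univ.filter (bad S)).card : ℝ) * n ^ m =
          ∑ z : Fin m → V,
            ((univ.filter fun x : Fin m → V => bad S (S.piecewise z x)).card : ℝ) := by
        have := congrArg (Nat.cast : ℕ → ℝ) h1
        push_cast at this
        simpa [hnn] using this
      rw [h4]
      calc _ ≤ ∑ _z : Fin m → V, n ^ m * η := Finset.sum_le_sum fun z _ => h2 z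
        _ = _ := by simp [hnn, mul_comm]
    exact le_of_mul_le_mul_right h3 hnm
  set good := univ.filter fun x : Fin m → V => Function.Injective x ∧
      ∀ S : Finset (Fin m), S.card = ℓ →
        (d - t) * (m : ℝ) ^ r ≤ r.factorial * degS (pullE (ℓ + r) E x) S with hgood
  have hcover : (univ : Finset (Fin m → V)) ⊆ good ∪
      ((univ.filter fun x : Fin m → V => ¬ Function.Injective x) ∪
        (univ.powersetCard ℓ).biUnion fun S => univ.filter (bad S)) := by
    intro x _
    simp only [hgood, hbad, mem_union, mem_filter, mem_univ, true_and, mem_biUnion,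
      mem_powersetCard, subset_univ]
    by_cases hx : Function.Injective x
    · by_cases hS : ∀ S : Finset (Fin m), S.card = ℓ →
        (d - t) * (m : ℝ) ^ r ≤ r.factorial * degS (pullE (ℓ + r) E x) S
      · exact Or.inl ⟨hx, hS⟩
      · push Not at hS
        obtain ⟨S, hS, hlt⟩ := hS
        exact Or.inr (Or.inr ⟨S, hS, by rw [Finset.card_image_of_injective _ hx, hS], hlt⟩)
    · exact Or.inr (Or.inl hx)
  have h1 : Fintype.card V ^ m ≤ good.card +
      ((univ.filter fun x : Fin m → V => ¬ Function.Injective x).card +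
        ∑ S ∈ univ.powersetCard ℓ, (univ.filter (bad S)).card) := by
    have := Finset.card_le_card hcover
    rw [Finset.card_univ, Fintype.card_fun, Fintype.card_fin] at this
    exact this.trans ((Finset.card_union_le _ _).trans (Nat.add_le_add_left
      ((Finset.card_union_le _ _).trans (Nat.add_le_add_left Finset.card_biUnion_le _)) _))
  have h1' : n ^ m ≤ good.card +
      ((univ.filter fun x : Fin m → V => ¬ Function.Injective x).card +
        ∑ S ∈ (univ : Finset (Fin m)).powersetCard ℓ, ((univ.filter (bad S)).card : ℝ)) := by
    rw [hnn]; exact_mod_cast h1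
  have h2 : ∑ S ∈ (univ : Finset (Fin m)).powersetCard ℓ, ((univ.filter (bad S)).card : ℝ) ≤
      n ^ m / 4 := by
    calc _ ≤ ∑ _S ∈ (univ : Finset (Fin m)).powersetCard ℓ, n ^ m * η :=
          Finset.sum_le_sum fun S hS => hbadS S (Finset.mem_powersetCard.mp hS).2
      _ = (m.choose ℓ : ℝ) * (n ^ m * η) := by simp
      _ ≤ (m : ℝ) ^ ℓ * (n ^ m * η) := by
          gcongr
          exact_mod_cast Nat.choose_le_pow m ℓ
      _ = n ^ m * ((m : ℝ) ^ ℓ * η) := by ring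
      _ ≤ n ^ m * (1 / 4) := by gcongr
      _ = _ := by ring
  have h3 : ((univ.filter fun x : Fin m → V => ¬ Function.Injective x).card : ℝ) ≤ n ^ m / 4 := by
    have h4 := card_not_injective_mul_le (ι := Fin m) (V := V)
    simp only [Fintype.card_fin] at h4
    have h4' : ((univ.filter fun x : Fin m → V => ¬ Function.Injective x).card : ℝ) * n ≤
        m ^ 2 * n ^ m := by rw [hnn]; exact_mod_cast h4
    have h5 : (4 * m ^ 2 : ℝ) ≤ n := by rw [hnn]; exact_mod_cast hn
    rw [← mul_le_mul_iff_left₀ hn0]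
    nlinarith
  linarith

/-! ### Blow-ups in dense families of tuples -/

/-- The power-mean inequality, also valid for empty `X`. -/
lemma card_mul_mean_pow_le {X : Type*} [Fintype X] (f : X → ℝ) (hf : ∀ x, 0 ≤ f x) {p : ℕ}
    (hp : 0 < p) :
    (Fintype.card X : ℝ) * ((∑ x, f x) / Fintype.card X) ^ p ≤ ∑ x, f x ^ p := by
  obtain ⟨q, rfl⟩ : ∃ q, p = q + 1 := ⟨p - 1, by omega⟩
  refine le_trans (le_of_eq ?_) (pow_sum_div_card_le_sum_pow (s := univ) (fun x _ => hf x) q)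
  rw [Finset.card_univ]
  by_cases h : (Fintype.card X : ℝ) = 0
  · have : IsEmpty X := Fintype.card_eq_zero_iff.mp (by exact_mod_cast h)
    simp
  · rw [div_pow]
    field_simp
    ring

open Classical in
/-- The number of `T`-blow-ups of an `m`-tuple, with repeated vertices allowed, all of whose
transversals lie in `A`. -/
noncomputable def blowupNum (T : Type*) {V : Type*} [Fintype T] [Fintype V] {m : ℕ}
    (A : Finset (Fin m → V)) : ℕ :=
  (univ.filter fun y : Fin m → T → V => ∀ c : Fin m → T, (fun i => y i (c i)) ∈ A).card

open Classical in
/-- A family of `m`-tuples of density `δ` contains at least a `δ ^ (|T| ^ m)` proportion of all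
possible `T`-blow-ups of an `m`-tuple; this is Jensen's inequality, one coordinate at a time. -/
lemma blowup_count {T V : Type*} [Fintype T] [Nonempty T] [Fintype V] [Nonempty V] :
    ∀ (m : ℕ) (A : Finset (Fin m → V)),
      ((A.card : ℝ) / (Fintype.card V : ℝ) ^ m) ^ (Fintype.card T ^ m) *
        ((Fintype.card V : ℝ) ^ Fintype.card T) ^ m ≤ blowupNum T A := by
  have hn : (0 : ℝ) < Fintype.card V := by exact_mod_cast Fintype.card_pos
  have ht : 0 < Fintype.card T := Fintype.card_pos
  set n : ℝ := (Fintype.card V : ℝ) with hnn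
  set t := Fintype.card T with htt
  intro m
  induction m with
  | zero =>
    intro A
    simp only [pow_zero, div_one, pow_one, mul_one, blowupNum]
    refine Nat.cast_le.mpr (Finset.card_le_card_of_injOn (fun _ => fun i => i.elim0) ?_ ?_)
    · intro x hx
      simp only [coe_filter, mem_univ, true_and, Set.mem_ofPred_eq]
      intro c
      rwa [Subsingleton.elim (fun i => _) x]
    · intro x _ y _ _
      exact Subsingleton.elim x y
  | succ m ih =>
    intro A
    set D : (T → V) → Finset (Fin m → V) := fun u =>
      univ.filter fun w => ∀ a, (Fin.cons (u a) w : Fin (m + 1) → V) ∈ A with hD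
    -- `u` lists the copies of coordinate `0`, and `D u` collects the tuples compatible with all of
    -- them
    have hsplit : blowupNum T A = ∑ u : T → V, blowupNum T (D u) := by
      simp only [blowupNum, Finset.card_filter]
      rw [← Fintype.sum_prod_type']
      refine (Fintype.sum_equiv (Fin.consEquiv fun _ => T → V) _ _ fun p => ?_).symm
      refine if_congr ?_ rfl rfl
      simp only [hD, mem_filter, mem_univ, true_and, Fin.consEquiv_apply]
      have hcons : ∀ (a : T) (c : Fin m → T),
          (Fin.cons (p.1 a) (fun i => p.2 i (c i)) : Fin (m + 1) → V) =
            fun i => (Fin.cons p.1 p.2 : Fin (m + 1) → T → V) i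
              ((Fin.cons a c : Fin (m + 1) → T) i) := by
        intro a c
        funext i
        refine Fin.cases ?_ (fun j => ?_) i <;> simp
      constructor
      · intro h c
        have := h (Fin.tail c) (c 0)
        rwa [hcons, Fin.cons_self_tail] at this
      · intro h c a
        rw [hcons]
        exact h _
    set deg : (Fin m → V) → ℕ := fun w =>
      (univ.filter fun v => (Fin.cons v w : Fin (m + 1) → V) ∈ A).card with hdeg
    have hA : (A.card : ℝ) = ∑ w, (deg w : ℝ) := by
      have : A.card = ∑ w, deg w := by
        simp only [hdeg, Finset.card_filter]
        rw [Finset.sum_comm, ← Fintype.sum_prod_type']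
        rw [← Finset.filter_univ_mem A, Finset.card_filter]
        simp only [Finset.filter_univ_mem]
        exact (Fintype.sum_equiv (Fin.consEquiv fun _ => V) _ _ fun p => rfl).symm
      exact_mod_cast this
    have hDsum : ∑ u, ((D u).card : ℝ) = ∑ w, (deg w : ℝ) ^ t := by
      have : ∑ u, (D u).card = ∑ w, deg w ^ t := by
        simp only [hD, Finset.card_filter]
        rw [Finset.sum_comm]
        refine Finset.sum_congr rfl fun w _ => ?_
        rw [← Finset.card_filter]
        have h1 : (univ.filter fun u : T → V => ∀ a, (Fin.cons (u a) w : Fin (m + 1) → V) ∈ A) =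
            Fintype.piFinset fun _ : T =>
              univ.filter fun v => (Fin.cons v w : Fin (m + 1) → V) ∈ A := by
          ext u
          simp [Fintype.mem_piFinset]
        rw [h1, Fintype.card_piFinset]
        simp [hdeg, htt]
      exact_mod_cast this
    have hnm : 0 < n ^ m := by positivity
    have hnt : 0 < n ^ t := by positivity
    have hJ1 : n ^ m * ((A.card : ℝ) / n ^ m) ^ t ≤ ∑ u, ((D u).card : ℝ) := by
      rw [hDsum, hA]
      have := card_mul_mean_pow_le (fun w => (deg w : ℝ)) (fun w => Nat.cast_nonneg _) ht
      simpa [hnn] using this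
    have hJ2 : n ^ t * ((∑ u : T → V, (D u).card / n ^ m) / n ^ t) ^ (t ^ m) ≤
        ∑ u : T → V, ((D u).card / n ^ m) ^ (t ^ m) := by
      have := card_mul_mean_pow_le (fun u : T → V => ((D u).card : ℝ) / n ^ m)
        (fun u => by positivity) (pow_pos ht m)
      simpa [hnn, htt] using this
    have hlow : ((A.card : ℝ) / n ^ (m + 1)) ^ t ≤ (∑ u : T → V, (D u).card / n ^ m) / n ^ t := by
      rw [← Finset.sum_div, le_div_iff₀ hnt, le_div_iff₀ hnm]
      refine le_trans (le_of_eq ?_) hJ1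
      rw [div_pow, div_pow, pow_succ, mul_pow]
      field_simp
    rw [hsplit]
    push_cast
    calc ((A.card : ℝ) / n ^ (m + 1)) ^ t ^ (m + 1) * (n ^ t) ^ (m + 1)
        = (n ^ t) ^ m * (n ^ t * (((A.card : ℝ) / n ^ (m + 1)) ^ t) ^ (t ^ m)) := by
          rw [pow_succ' t, pow_succ (n ^ t), pow_mul (_ / _)]; ring
      _ ≤ (n ^ t) ^ m * (n ^ t * ((∑ u : T → V, (D u).card / n ^ m) / n ^ t) ^ (t ^ m)) := by
          gcongr
      _ ≤ (n ^ t) ^ m * ∑ u : T → V, ((D u).card / n ^ m) ^ (t ^ m) := by gcongr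
      _ = ∑ u : T → V, ((D u).card / n ^ m) ^ (t ^ m) * (n ^ t) ^ m := by
          rw [Finset.mul_sum]
          exact Finset.sum_congr rfl fun u _ => mul_comm _ _
      _ ≤ ∑ u : T → V, (blowupNum T (D u) : ℝ) := Finset.sum_le_sum fun u _ => ih (D u)

/-- Dense families of `m`-tuples contain blow-ups on distinct vertices (Erdős). -/
lemma exists_blowup {T V : Type*} [Fintype T] [Nonempty T] [Fintype V] [Nonempty V] (m : ℕ)
    {δ : ℝ} (hδ : 0 ≤ δ) (A : Finset (Fin m → V))
    (hA : δ * (Fintype.card V : ℝ) ^ m ≤ A.card)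
    (hn : ((m * Fintype.card T : ℕ) : ℝ) ^ 2 < δ ^ (Fintype.card T ^ m) * Fintype.card V) :
    ∃ y : Fin m × T → V, Function.Injective y ∧ ∀ c : Fin m → T, (fun i => y (i, c i)) ∈ A := by
  classical
  by_contra hcon
  push Not at hcon
  have hn0 : (0 : ℝ) < Fintype.card V := by exact_mod_cast Fintype.card_pos
  set n : ℝ := (Fintype.card V : ℝ) with hnn
  set t := Fintype.card T with htt
  have hnm : 0 < n ^ m := by positivity
  have h1 := blowup_count (T := T) m A
  rw [blowupNum] at h1
  have h2 : (univ.filter fun y : Fin m → T → V =>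
      ∀ c : Fin m → T, (fun i => y i (c i)) ∈ A).card ≤
      (univ.filter fun y : Fin m × T → V => ¬ Function.Injective y).card := by
    refine Finset.card_le_card_of_injOn Function.uncurry ?_
      (Function.uncurry_injective.injOn)
    intro y hy
    simp only [coe_filter, mem_univ, true_and, Set.mem_ofPred_eq] at hy ⊢
    intro hinj
    obtain ⟨c, hc⟩ := hcon _ hinj
    exact hc (hy c)
  have h3 := card_not_injective_mul_le (ι := Fin m × T) (V := V)
  simp only [Fintype.card_prod, Fintype.card_fin] at h3
  have h2' : ((univ.filter fun y : Fin m → T → V =>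
      ∀ c : Fin m → T, (fun i => y i (c i)) ∈ A).card : ℝ) ≤
      (univ.filter fun y : Fin m × T → V => ¬ Function.Injective y).card := by exact_mod_cast h2
  have h3' : ((univ.filter fun y : Fin m × T → V => ¬ Function.Injective y).card : ℝ) * n ≤
      ((m * t : ℕ) : ℝ) ^ 2 * n ^ (m * t) := by rw [hnn]; exact_mod_cast h3
  have h4 : δ ≤ A.card / n ^ m := by rwa [le_div_iff₀ hnm]
  have h5 : δ ^ (t ^ m) * (n ^ t) ^ m ≤ (A.card / n ^ m) ^ (t ^ m) * (n ^ t) ^ m := by gcongr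
  have h6 : (n ^ t) ^ m = n ^ (m * t) := by rw [← pow_mul, mul_comm]
  have h7 : 0 < n ^ (m * t) := by positivity
  have h8 : δ ^ (t ^ m) * (n ^ t) ^ m * n ≤ ((m * t : ℕ) : ℝ) ^ 2 * n ^ (m * t) := by
    refine le_trans (mul_le_mul_of_nonneg_right (h5.trans (h1.trans ?_)) hn0.le) h3'
    convert h2'
  rw [h6] at h8
  nlinarith

/-! ### Existence of the limit -/

/-- A bounded sequence eventually below `a m + t` for all large `m` has `limsup ≤ liminf`. -/
lemma exists_tendsto_of_almost_decreasing (a : ℕ → ℝ) (h0 : ∀ n, 0 ≤ a n) (h1 : ∀ n, a n ≤ 1)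
    (h : ∀ t > 0, ∀ᶠ m in atTop, ∀ᶠ n in atTop, a n ≤ a m + t) :
    ∃ x, Tendsto a atTop (nhds x) := by
  have hbA : IsBoundedUnder (· ≤ ·) atTop a := isBoundedUnder_of ⟨1, h1⟩
  have hbB : IsBoundedUnder (· ≥ ·) atTop a := isBoundedUnder_of ⟨0, h0⟩
  refine ⟨liminf a atTop, tendsto_of_le_liminf_of_limsup_le le_rfl ?_ hbA hbB⟩
  refine le_of_forall_pos_le_add fun t ht => ?_
  have hfreq : ∃ᶠ m in atTop, a m < liminf a atTop + t / 2 :=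
    frequently_lt_of_liminf_lt hbA.isCoboundedUnder_ge (by linarith)
  obtain ⟨m, hm1, hm2⟩ := (hfreq.and_eventually (h (t / 2) (by linarith))).exists
  refine limsup_le_of_le hbB.isCoboundedUnder_le ?_
  filter_upwards [hm2] with n hn
  linarith

/-- The two normalisations `n ^ r / r!` and `C(n-ℓ, r)` agree asymptotically. -/
lemma tendsto_pow_div_choose (ℓ r : ℕ) :
    Tendsto (fun n : ℕ => (n : ℝ) ^ r / (r.factorial * ((n - ℓ).choose r : ℝ))) atTop (nhds 1) := by
  rw [← tendsto_add_atTop_iff_nat ℓ]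
  have h1 : Tendsto (fun n : ℕ => ((n : ℝ) ^ r / r.factorial) / (n.choose r : ℝ)) atTop
      (nhds 1) := by
    refine (Asymptotics.isEquivalent_iff_tendsto_one ?_).mp (isEquivalent_choose r).symm
    filter_upwards [eventually_ge_atTop r] with n hn
    exact_mod_cast (Nat.choose_pos hn).ne'
  have h2 : Tendsto (fun n : ℕ => (((n : ℝ) + ℓ) / n) ^ r) atTop (nhds 1) := by
    have : Tendsto (fun n : ℕ => (1 + (ℓ : ℝ) / n) ^ r) atTop (nhds ((1 + 0) ^ r)) :=
      ((tendsto_const_div_atTop_nhds_zero_nat (ℓ : ℝ)).const_add 1).pow r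
    rw [add_zero, one_pow] at this
    refine this.congr' ?_
    filter_upwards [eventually_gt_atTop 0] with n hn
    have : (n : ℝ) ≠ 0 := by exact_mod_cast hn.ne'
    congr 1
    field_simp
  have h3 := h2.mul h1
  rw [one_mul] at h3
  refine h3.congr' ?_
  filter_upwards [eventually_gt_atTop 0] with n hn
  have : (n : ℝ) ≠ 0 := by exact_mod_cast hn.ne'
  rw [Nat.add_sub_cancel, div_pow]
  push_cast
  field_simp

/-! ### Extremal minimum degrees -/

lemma minDeg_le_degS {V : Type*} [Fintype V] [DecidableEq V] (E : Finset (Finset V))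
    (S : Finset V) : minDeg S.card univ E ≤ degS E S :=
  Nat.sInf_le ⟨S, Finset.subset_univ _, rfl, rfl⟩

lemma exists_minDeg_eq {V : Type*} [Fintype V] [DecidableEq V] {ℓ : ℕ} (hℓ : ℓ ≤ Fintype.card V)
    (E : Finset (Finset V)) : ∃ S : Finset V, S.card = ℓ ∧ minDeg ℓ univ E = degS E S := by
  have hne : {d | ∃ S ⊆ (univ : Finset V), S.card = ℓ ∧ d = degS E S}.Nonempty := by
    obtain ⟨S, hS, hc⟩ := Finset.exists_subset_card_eq (s := (univ : Finset V)) (n := ℓ)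
      (by rwa [Finset.card_univ])
    exact ⟨_, S, hS, hc, rfl⟩
  obtain ⟨S, _, hS, h⟩ := Nat.sInf_mem hne
  exact ⟨S, hS, h⟩

lemma bddAbove_exDeg_set [DecidableEq α] (k ℓ n : ℕ) (VF : Finset α) (EF : Finset (Finset α)) :
    BddAbove {d | ∃ E : Finset (Finset (Fin n)), (∀ e ∈ E, e.card = k) ∧
      ¬ ContainsCopy VF EF (Finset.univ : Finset (Fin n)) E ∧ d = minDeg ℓ Finset.univ E} := by
  refine Set.Finite.bddAbove ((Set.finite_range fun E : Finset (Finset (Fin n)) =>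
    minDeg ℓ univ E).subset ?_)
  rintro d ⟨E, _, _, rfl⟩
  exact ⟨E, rfl⟩

/-- Positivity rules out the junk value `sSup ∅ = 0`, so the extremal degree is attained. -/
lemma exists_extremal [DecidableEq α] {k ℓ n : ℕ} {VF : Finset α} {EF : Finset (Finset α)}
    (h : 0 < exDeg k ℓ n VF EF) : ∃ E : Finset (Finset (Fin n)), (∀ e ∈ E, e.card = k) ∧
      ¬ ContainsCopy VF EF (Finset.univ : Finset (Fin n)) E ∧
      exDeg k ℓ n VF EF = minDeg ℓ Finset.univ E := by
  refine Nat.sSup_mem ?_ (bddAbove_exDeg_set k ℓ n VF EF)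
  by_contra hne
  rw [Set.not_nonempty_iff_eq_empty] at hne
  rw [exDeg, hne] at h
  simp at h

/-- The extremal minimum degree normalised by `n ^ r / r!` instead of the binomial coefficient. -/
noncomputable def exNorm [DecidableEq α] (ℓ r n : ℕ) (VF : Finset α) (EF : Finset (Finset α)) : ℝ :=
  r.factorial * exDeg (ℓ + r) ℓ n VF EF / (n : ℝ) ^ r

lemma factorial_mul_minDeg_le {ℓ r n : ℕ} (E : Finset (Finset (Fin n)))
    (hE : ∀ e ∈ E, e.card = ℓ + r) : r.factorial * minDeg ℓ univ E ≤ n ^ r := by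
  by_cases hℓ : ℓ ≤ Fintype.card (Fin n)
  · obtain ⟨S, hS, h⟩ := exists_minDeg_eq hℓ E
    rw [h, ← card_tuples_link E hE S hS]
    simpa using Finset.card_le_univ (univ.filter fun u : Fin r → Fin n => S ∪ univ.image u ∈ E)
  · have : {d | ∃ S ⊆ (univ : Finset (Fin n)), S.card = ℓ ∧ d = degS E S} = ∅ := by
      rw [Set.eq_empty_iff_forall_notMem]
      rintro d ⟨S, _, hS, _⟩
      exact hℓ (hS ▸ Finset.card_le_univ S)
    rw [minDeg, this]
    simp

lemma exNorm_nonneg [DecidableEq α] (ℓ r n : ℕ) (VF : Finset α) (EF : Finset (Finset α)) :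
    0 ≤ exNorm ℓ r n VF EF := by
  unfold exNorm; positivity

lemma exNorm_le_one [DecidableEq α] (ℓ r n : ℕ) (VF : Finset α) (EF : Finset (Finset α)) :
    exNorm ℓ r n VF EF ≤ 1 := by
  refine div_le_one_of_le₀ ?_ (by positivity)
  rcases Nat.eq_zero_or_pos (exDeg (ℓ + r) ℓ n VF EF) with h | h
  · rw [h]; simp
  · obtain ⟨E, hE, _, hEq⟩ := exists_extremal h
    rw [hEq]
    exact_mod_cast factorial_mul_minDeg_le E hE

open Classical in
/-- For `m` large, at least half of the `m`-tuples of vertices of a host with `n ≥ 4 m ^ 2` vertices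
induce a sub-`k`-graph whose normalised minimum `ℓ`-degree is at most `t` below that of the host. -/
lemma eventually_half_tuples_good {ℓ r : ℕ} (hr : 0 < r) {t : ℝ} (ht : 0 < t) (ht1 : t ≤ 1) :
    ∀ᶠ m : ℕ in atTop, ∀ n : ℕ, 4 * m ^ 2 ≤ n →
      ∀ E : Finset (Finset (Fin n)), (∀ e ∈ E, e.card = ℓ + r) →
      (n : ℝ) ^ m / 2 ≤ (univ.filter fun x : Fin m → Fin n =>
        Function.Injective x ∧ ∀ S : Finset (Fin m), S.card = ℓ →
        (r.factorial * minDeg ℓ univ E / (n : ℝ) ^ r - t) * (m : ℝ) ^ r ≤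
          r.factorial * degS (pullE (ℓ + r) E x) S).card := by
  have hκ : 0 < t ^ 2 / (16 * (r : ℝ) ^ 2) := by
    have : (0 : ℝ) < r := by exact_mod_cast hr
    positivity
  have hexp : ∀ᶠ m : ℕ in atTop,
      (m : ℝ) ^ ℓ * Real.exp (-(t ^ 2 / (16 * r ^ 2)) * m) ≤ 1 / 4 := by
    have h1 := ((isLittleO_pow_exp_pos_mul_atTop ℓ hκ).bound
      (by norm_num : (0 : ℝ) < 1 / 4))
    filter_upwards [tendsto_natCast_atTop_atTop.eventually h1] with m hm
    rw [Real.norm_of_nonneg (by positivity), Real.norm_of_nonneg (by positivity)] at hm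
    rw [neg_mul, Real.exp_neg, ← div_eq_mul_inv, div_le_iff₀ (Real.exp_pos _)]
    exact hm
  have hlin : ∀ᶠ m : ℕ in atTop, (r ^ 2 + r * ℓ : ℝ) ≤ t / 2 * m :=
    (tendsto_natCast_atTop_atTop.const_mul_atTop (by positivity : 0 < t / 2)).eventually_ge_atTop _
  filter_upwards [hexp, hlin, eventually_gt_atTop 0] with m h1 h2 hm n hn E hE
  have hn0 : 0 < n := lt_of_lt_of_le (by positivity) hn
  have : Nonempty (Fin n) := ⟨⟨0, hn0⟩⟩
  have hnr : (0 : ℝ) < (n : ℝ) ^ r := by positivity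
  have := half_tuples_good (V := Fin n) (d := r.factorial * minDeg ℓ univ E / (n : ℝ) ^ r) hm hr
    (by positivity) ht ht1 h2 h1 (by simpa using hn) E hE (by
      rintro Z rfl
      rw [Fintype.card_fin, div_mul_cancel₀ _ hnr.ne']
      have := minDeg_le_degS E Z
      gcongr)
  simpa using this

/-- A random induced `m`-vertex subgraph of an extremal host is again `F`-free and loses little
degree. -/
lemma exNorm_almost_decreasing [DecidableEq α] {ℓ r : ℕ} (hr : 0 < r) (VF : Finset α)
    (EF : Finset (Finset α)) {t : ℝ} (ht : 0 < t) :
    ∀ᶠ m in atTop, ∀ᶠ n in atTop, exNorm ℓ r n VF EF ≤ exNorm ℓ r m VF EF + t := by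
  have hs : 0 < min t 1 := lt_min ht one_pos
  filter_upwards [eventually_half_tuples_good (ℓ := ℓ) hr hs (min_le_right _ _),
    eventually_ge_atTop ℓ, eventually_gt_atTop 0] with m hm hℓm hm0
  filter_upwards [eventually_ge_atTop (4 * m ^ 2)] with n hn
  have hn0 : 0 < n := lt_of_lt_of_le (by positivity) hn
  rcases Nat.eq_zero_or_pos (exDeg (ℓ + r) ℓ n VF EF) with h | h
  · have : exNorm ℓ r n VF EF = 0 := by rw [exNorm, h]; simp
    rw [this]
    have := exNorm_nonneg ℓ r m VF EF
    positivity
  obtain ⟨E, hE, hfree, hEq⟩ := exists_extremal h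
  have hhalf := hm n hn E hE
  obtain ⟨x, hx⟩ : Finset.Nonempty _ := Finset.card_pos.mp (Nat.cast_pos.mp
    (lt_of_lt_of_le (by positivity : (0 : ℝ) < (n : ℝ) ^ m / 2) hhalf))
  obtain ⟨hinj, hdeg⟩ := (Finset.mem_filter.mp hx).2
  obtain ⟨S, hS, hmin⟩ := exists_minDeg_eq (by simpa using hℓm) (pullE (ℓ + r) E x)
  have hle : minDeg ℓ univ (pullE (ℓ + r) E x) ≤ exDeg (ℓ + r) ℓ m VF EF := by
    refine le_csSup (bddAbove_exDeg_set _ _ _ _ _) ⟨pullE (ℓ + r) E x, ?_, ?_, rfl⟩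
    · exact fun e he => (Finset.mem_powersetCard.mp (Finset.mem_filter.mp he).1).2
    · rintro ⟨f, hf, _, hfE⟩
      refine hfree ⟨x ∘ f, fun a ha b hb hab => hf ha hb (hinj hab), fun _ _ => mem_univ _,
        fun e he => ?_⟩
      rw [← Finset.image_image]
      exact (Finset.mem_filter.mp (hfE e he)).2
  have h1 := hdeg S hS
  rw [← hmin, ← hEq] at h1
  have h2 : (minDeg ℓ univ (pullE (ℓ + r) E x) : ℝ) ≤ exDeg (ℓ + r) ℓ m VF EF := by
    exact_mod_cast hle
  have hmr : (0 : ℝ) < (m : ℝ) ^ r := by positivity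
  have h3 : exNorm ℓ r n VF EF - min t 1 ≤ exNorm ℓ r m VF EF := by
    unfold exNorm
    rw [le_div_iff₀ hmr]
    exact h1.trans (by gcongr)
  linarith [min_le_left t 1]

lemma exists_tendsto_exNorm [DecidableEq α] {ℓ r : ℕ} (hr : 0 < r) (VF : Finset α)
    (EF : Finset (Finset α)) :
    ∃ x, Tendsto (fun n => exNorm ℓ r n VF EF) atTop (nhds x) :=
  exists_tendsto_of_almost_decreasing _ (fun n => exNorm_nonneg ℓ r n VF EF)
    (fun n => exNorm_le_one ℓ r n VF EF) fun _ ht => exNorm_almost_decreasing hr VF EF ht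

lemma hasTuranDensity_of_tendsto_exNorm [DecidableEq α] {ℓ r : ℕ} (VF : Finset α)
    (EF : Finset (Finset α)) {x : ℝ}
    (h : Tendsto (fun n => exNorm ℓ r n VF EF) atTop (nhds x)) :
    HasTuranDensity (ℓ + r) ℓ VF EF x := by
  have h1 := h.mul (tendsto_pow_div_choose ℓ r)
  rw [mul_one] at h1
  refine h1.congr' ?_
  filter_upwards [eventually_gt_atTop 0] with n hn
  have hn' : (n : ℝ) ≠ 0 := by exact_mod_cast hn.ne'
  have hf : (r.factorial : ℝ) ≠ 0 := by exact_mod_cast r.factorial_ne_zero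
  rw [exNorm, Nat.add_sub_cancel_left]
  field_simp

/-! ### Embedding the tensor product -/

/-- A blow-up of `Fam i` inside `E` contains the tensor product: the vertex `v` goes to the copy of
its `i`-th coordinate indexed by `v` itself. -/
lemma containsCopy_tensorE {k m s : ℕ} {V : Type*} [Fintype V] [DecidableEq V]
    (Fam : Fin s → Finset (Finset (Fin m))) (i : Fin s) (hFam : ∀ e ∈ Fam i, e.card = k)
    (E : Finset (Finset V)) (y : Fin m × (Fin s → Fin m) → V) (hy : Function.Injective y)
    (hyE : ∀ c : Fin m → Fin s → Fin m, pullE k E (fun j => y (j, c j)) = Fam i) :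
    ContainsCopy (univ : Finset (Fin s → Fin m)) (tensorE k m s Fam) univ E := by
  classical
  refine ⟨fun v => y (v i, v), fun u _ v _ huv => (Prod.ext_iff.mp (hy huv)).2,
    fun _ _ => mem_univ _, fun e he => ?_⟩
  obtain ⟨hek, hecoord⟩ := Finset.mem_filter.mp he
  have hcard := (Finset.mem_powersetCard.mp hek).2
  have hinj : Set.InjOn (fun v : Fin s → Fin m => v i) e := by
    rw [← Finset.card_image_iff, hFam _ (hecoord i), hcard]
  -- choose for each `j` the unique vertex of `e` with `i`-th coordinate `j`, if there is one
  have hex : ∃ c : Fin m → Fin s → Fin m, ∀ v ∈ e, c (v i) = v := by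
    refine ⟨fun j => if h : ∃ v ∈ e, v i = j then h.choose else fun _ => j, fun v hv => ?_⟩
    have h : ∃ u ∈ e, u i = v i := ⟨v, hv, rfl⟩
    simp only [dif_pos h]
    exact hinj h.choose_spec.1 hv h.choose_spec.2
  obtain ⟨c, hc⟩ := hex
  have h1 : e.image (fun v => v i) ∈ pullE k E (fun j => y (j, c j)) := by
    rw [hyE c]; exact hecoord i
  have h2 := (Finset.mem_filter.mp h1).2
  rw [Finset.image_image] at h2
  have h3 : e.image (fun v => y (v i, v)) = e.image ((fun j => y (j, c j)) ∘ fun v => v i) :=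
    Finset.image_congr fun v hv => by simp [hc v hv]
  rw [h3]
  exact h2

/-- For `m` large compared with `ε`, the normalised extremal degree of the tensor product is
eventually at most `ε`. -/
lemma eventually_exNorm_tensorE_le {ℓ r : ℕ} (hr : 0 < r) {ε : ℝ} (hε : 0 < ε) :
    ∀ᶠ m : ℕ in atTop, ∀ (s : ℕ) (Fam : Fin s → Finset (Finset (Fin m))),
      EnumeratesBig (ℓ + r) ℓ m s Fam →
      ∀ᶠ n in atTop, exNorm ℓ r n (univ : Finset (Fin s → Fin m)) (tensorE (ℓ + r) m s Fam) ≤ ε := by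
  set t : ℝ := min ε 1 / 2 with ht
  have ht0 : 0 < t := by have := lt_min hε one_pos; positivity
  have ht1 : t ≤ 1 := by have := min_le_right ε 1; linarith
  have htε : t ≤ ε / 2 := by have := min_le_left ε 1; linarith
  have hlin : ∀ᶠ m : ℕ in atTop, (2 * r.factorial : ℝ) ≤ ε / 2 * m :=
    (tendsto_natCast_atTop_atTop.const_mul_atTop (by positivity : 0 < ε / 2)).eventually_ge_atTop _
  filter_upwards [eventually_half_tuples_good (ℓ := ℓ) hr ht0 ht1, hlin, eventually_ge_atTop ℓ,
    eventually_gt_atTop 0] with m hm hlinm hℓm hm0 s Fam hFam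
  have hm1 : Nonempty (Fin s → Fin m) := ⟨fun _ => ⟨0, hm0⟩⟩
  set T := Fin s → Fin m
  -- the density of tuples inducing the most popular `Fam i`
  set δ : ℝ := 1 / (2 * (s + 1)) with hδ
  have hδ0 : 0 < δ := by positivity
  have hlarge : ∀ᶠ n : ℕ in atTop,
      ((m * Fintype.card T : ℕ) : ℝ) ^ 2 < δ ^ (Fintype.card T ^ m) * n :=
    (tendsto_natCast_atTop_atTop.const_mul_atTop (by positivity)).eventually_gt_atTop _
  filter_upwards [hlarge, eventually_ge_atTop (4 * m ^ 2)] with n hnl hn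
  by_contra hcon
  push Not at hcon
  have hn0 : 0 < n := lt_of_lt_of_le (by positivity) hn
  have hne : Nonempty (Fin n) := ⟨⟨0, hn0⟩⟩
  have hpos : 0 < exDeg (ℓ + r) ℓ n (univ : Finset T) (tensorE (ℓ + r) m s Fam) := by
    rcases Nat.eq_zero_or_pos (exDeg (ℓ + r) ℓ n (univ : Finset T) (tensorE (ℓ + r) m s Fam))
      with h | h
    · rw [exNorm, h] at hcon
      simp at hcon
      linarith
    · exact h
  obtain ⟨E, hE, hfree, hEq⟩ := exists_extremal hpos
  have hhalf := hm n hn E hE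
  rw [← hEq] at hhalf
  change _ < _ / _ at hcon
  set d : ℝ := r.factorial * exDeg (ℓ + r) ℓ n (univ : Finset T) (tensorE (ℓ + r) m s Fam) /
    (n : ℝ) ^ r with hd
  have hbig : ∀ x : Fin m → Fin n, (∀ S : Finset (Fin m), S.card = ℓ →
      (d - t) * (m : ℝ) ^ r ≤ r.factorial * degS (pullE (ℓ + r) E x) S) →
      ∃ i, Fam i = pullE (ℓ + r) E x := by
    intro x hx
    refine (hFam.2 _).mp
      ⟨fun e he => (Finset.mem_powersetCard.mp (Finset.mem_filter.mp he).1).2, ?_⟩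
    obtain ⟨S, hS, hmin⟩ := exists_minDeg_eq (by simpa using hℓm) (pullE (ℓ + r) E x)
    rw [hmin]
    have h1 := hx S hS
    have hr1 : ℓ + r - ℓ - 1 = r - 1 := by omega
    rw [hr1]
    have h2 : (m - ℓ - 1).choose (r - 1) ≤ m ^ (r - 1) :=
      (Nat.choose_le_pow _ _).trans (Nat.pow_le_pow_left (by omega) _)
    -- the threshold defining the family has order `m ^ (r - 1)`, below any positive density
    have h3 : (1 : ℝ) ≤ (m : ℝ) ^ (r - 1) := one_le_pow₀ (by exact_mod_cast hm0)
    have h2' : ((m - ℓ - 1).choose (r - 1) : ℝ) ≤ (m : ℝ) ^ (r - 1) := by exact_mod_cast h2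
    have hmr : (m : ℝ) ^ r = m * (m : ℝ) ^ (r - 1) := by
      rw [← pow_succ']; congr 1; omega
    have hf : (0 : ℝ) < r.factorial := by exact_mod_cast r.factorial_pos
    have h4 : (r.factorial : ℝ) * (((m - ℓ - 1).choose (r - 1) : ℝ) + 1) ≤
        r.factorial * degS (pullE (ℓ + r) E x) S := by
      refine le_trans ?_ h1
      calc (r.factorial : ℝ) * (((m - ℓ - 1).choose (r - 1) : ℝ) + 1)
          ≤ r.factorial * ((m : ℝ) ^ (r - 1) + (m : ℝ) ^ (r - 1)) := by gcongr
        _ = 2 * r.factorial * (m : ℝ) ^ (r - 1) := by ring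
        _ ≤ ε / 2 * m * (m : ℝ) ^ (r - 1) := by gcongr
        _ = ε / 2 * (m : ℝ) ^ r := by rw [hmr]; ring
        _ ≤ (d - t) * (m : ℝ) ^ r := by
          refine mul_le_mul_of_nonneg_right ?_ (by positivity)
          linarith
    have h5 := le_of_mul_le_mul_left h4 hf
    exact_mod_cast h5
  set A : Fin s → Finset (Fin m → Fin n) := fun i =>
    univ.filter fun x => pullE (ℓ + r) E x = Fam i with hA
  have hex : ∃ i, δ * (n : ℝ) ^ m ≤ (A i).card := by
    by_contra hno
    push Not at hno
    have h1 : (n : ℝ) ^ m / 2 ≤ ∑ i, ((A i).card : ℝ) := by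
      refine hhalf.trans ?_
      rw [← Nat.cast_sum]
      refine Nat.cast_le.mpr (le_trans (Finset.card_le_card ?_)
        (Finset.card_biUnion_le (s := univ) (t := A)))
      intro x hx
      obtain ⟨i, hi⟩ := hbig x (Finset.mem_filter.mp hx).2.2
      exact Finset.mem_biUnion.mpr
        ⟨i, mem_univ _, Finset.mem_filter.mpr ⟨mem_univ _, hi.symm⟩⟩
    have h2 : ∑ i, ((A i).card : ℝ) ≤ s * (δ * (n : ℝ) ^ m) := by
      calc _ ≤ ∑ _i : Fin s, δ * (n : ℝ) ^ m := Finset.sum_le_sum fun i _ => (hno i).le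
        _ = _ := by simp
    have hnm : (0 : ℝ) < (n : ℝ) ^ m := by positivity
    have h3 : (s : ℝ) * δ < 1 / 2 := by
      rw [hδ, mul_one_div, div_lt_div_iff₀ (by positivity) (by norm_num)]
      linarith
    nlinarith
  obtain ⟨i, hi⟩ := hex
  obtain ⟨y, hy, hyA⟩ := exists_blowup (T := T) m hδ0.le (A i) (by simpa using hi)
    (by simpa using hnl)
  exact hfree (containsCopy_tensorE Fam i ((hFam.2 (Fam i)).mpr ⟨i, rfl⟩).1 E y hy
    fun c => (Finset.mem_filter.mp (hyA c)).2)

/-- For `k > ℓ ≥ 1` with `k ≥ 3` and every `ε > 0`, there is `M` such that for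
every `m > M` the tensor product `F_{m,ℓ}^{(k)}` of all `m`-vertex `k`-graphs with minimum
`ℓ`-degree at least `C(m-ℓ-1, k-ℓ-1) + 1` satisfies `π_ℓ(F_{m,ℓ}^{(k)}) ≤ ε`. -/
theorem stmt_17 (k ℓ : ℕ) (hℓ : 1 ≤ ℓ) (hℓk : ℓ < k) (hk : 3 ≤ k) (ε : ℝ) (hε : 0 < ε) :
    ∃ M : ℕ, 0 < M ∧ ∀ m : ℕ, M < m →
      ∀ (s : ℕ) (Fam : Fin s → Finset (Finset (Fin m))), EnumeratesBig k ℓ m s Fam →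
        ∃ x : ℝ, x ≤ ε ∧
          HasTuranDensity k ℓ (Finset.univ : Finset (Fin s → Fin m)) (tensorE k m s Fam) x := by
  obtain ⟨r, rfl⟩ : ∃ r, k = ℓ + r := ⟨k - ℓ, by omega⟩
  have hr : 0 < r := by omega
  obtain ⟨M, hM⟩ := eventually_atTop.mp (eventually_exNorm_tensorE_le (ℓ := ℓ) hr hε)
  refine ⟨M + 1, Nat.succ_pos _, fun m hm s Fam hFam => ?_⟩
  obtain ⟨x, hx⟩ := exists_tendsto_exNorm (ℓ := ℓ) hr (univ : Finset (Fin s → Fin m))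
    (tensorE (ℓ + r) m s Fam)
  exact ⟨x, le_of_tendsto hx (hM m (by omega) s Fam hFam),
    hasTuranDensity_of_tendsto_exNorm _ _ hx⟩
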